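/- Equip ℝ^{2n} with the standard symplectic form Ω(Z,Z') = Σ_{j=1}^n (u_j v'_j − v_j u'_j) for Z=(u,v), Z'=(u',v'), the standard inner product ⟨·,·⟩, and the standard basis e₁,…,e_n, f₁,…,f_n with Ω(e_i,f_j)=δ_{ij}. Let 0 ≤ l ≤ n and m ≥ 1, and let ν₁,…,ν_m ∈ ℝ^{2n} be orthonormal vectors such that: Ω(ν_j,ν_k) = 0 for all j,k; ⟨ν_j, e_i⟩ = 0 and ⟨ν_j, f_i⟩ = 0 for all j and all i with n−l < i ≤ n; and span{ν₁,…,ν_m} ∩ span{e₁,…,e_n} = {0}. Define the (n−l)×m matrices A and B by A_{ij} = Ω(e_i,ν_j) and B_{ij} = ⟨e_i,ν_j⟩ for 1 ≤ i ≤ n−l. Then the double integral J = ∫_{ℝ^m} ∫_{ℝ^n} exp( −(π/2)·‖Σ_{i=1}^n u_i e_i − Σ_{j=1}^m t_j ν_j‖² − π√−1·Ω(Σ_{i=1}^n u_i e_i, Σ_{j=1}^m t_j ν_j) ) du dt converges absolutely and satisfies J² · det(AᵀA + √−1·BᵀA) = 2^n. -/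

import Mathlib

/-!
Write `ν j = (b j, a j)` and let `U`, `V` be the `n × m` matrices with columns `b j`, `a j`. The
exponent is `-(π/2)(|u - U t|² + |V t|²) - π i ⟨u, V t⟩`, so for fixed `t` the integral over `u` is a
Gaussian with linear term, equal to `2^(n/2) exp (-π tᵀ(VᵀV + i UᵀV) t)` (`integral_modelKernel`).

Since `span ν` meets the Lagrangian `span e` only in `0`, `V` is injective and `VᵀV` is positive
definite; since `span ν` is isotropic, `UᵀV` is symmetric. Simultaneous diagonalization
(`exists_simultaneous_diag`) reduces the integral over `t` to one-dimensional Gaussians, so its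
square is the inverse of `det (VᵀV + i UᵀV)` (`gaussian_matrix`). The rows of `V` with index beyond
`n - l` vanish, hence `VᵀV = AᵀA` and `UᵀV = BᵀA`.

For absolute convergence, the integral over `u` of the absolute value is a constant times
`exp (-(π/2) |V t|²)`, which is integrable in `t`; Tonelli's theorem applies.
-/

open scoped Real
open MeasureTheory

/-- Points of `ℝ^{2n}` written as pairs `Z = (u, v)`. -/
abbrev RR2 (n : ℕ) := (Fin n → ℝ) × (Fin n → ℝ)

/-- The standard symplectic form `Ω(Z,Z') = Σ_j (u_j v'_j - v_j u'_j)` on `ℝ^{2n}`. -/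
def stdSymp {n : ℕ} (Z Z' : RR2 n) : ℝ := ∑ j, (Z.1 j * Z'.2 j - Z.2 j * Z'.1 j)

/-- The standard inner product on `ℝ^{2n}`. -/
def stdInner {n : ℕ} (Z Z' : RR2 n) : ℝ := ∑ j, Z.1 j * Z'.1 j + ∑ j, Z.2 j * Z'.2 j

/-- The standard basis vectors `e_i` (the `u`-directions). -/
def eVec {n : ℕ} (i : Fin n) : RR2 n := (Pi.single i 1, 0)

/-- The standard basis vectors `f_i` (the `v`-directions). -/
def fVec {n : ℕ} (i : Fin n) : RR2 n := (0, Pi.single i 1)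

/-- The model Bergman kernel integrand
`exp(-(π/2)‖Σᵢ uᵢ eᵢ - Σⱼ tⱼ νⱼ‖² - π √-1 Ω(Σᵢ uᵢ eᵢ, Σⱼ tⱼ νⱼ))`,
as a function of `(t, u) ∈ ℝ^m × ℝ^n`. -/
noncomputable def modelKernel {n m : ℕ} (ν : Fin m → RR2 n)
    (t : Fin m → ℝ) (u : Fin n → ℝ) : ℂ :=
  Complex.exp
    (-((π : ℂ) / 2) *
        ((stdInner ((∑ i, u i • eVec i) - ∑ j, t j • ν j)
            ((∑ i, u i • eVec i) - ∑ j, t j • ν j) : ℝ) : ℂ)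
      - (π : ℂ) * Complex.I *
        ((stdSymp (∑ i, u i • eVec i) (∑ j, t j • ν j) : ℝ) : ℂ))

open Matrix

theorem exists_orthogonal_diag {m : ℕ} {Q : Matrix (Fin m) (Fin m) ℝ} (hQ : Q.IsHermitian) :
    ∃ (V : Matrix (Fin m) (Fin m) ℝ) (d : Fin m → ℝ), Vᵀ * V = 1 ∧ Vᵀ * Q * V = diagonal d := by
  refine ⟨hQ.eigenvectorUnitary, hQ.eigenvalues, ?_, ?_⟩
  · have := Unitary.coe_star_mul_self hQ.eigenvectorUnitary
    simpa [star_eq_conjTranspose] using this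
  · have := hQ.conjStarAlgAut_star_eigenvectorUnitary
    simpa [Unitary.conjStarAlgAut_star_apply, star_eq_conjTranspose] using this

/-- Simultaneous diagonalization of a positive definite and a symmetric quadratic form. -/
theorem exists_simultaneous_diag {m : ℕ} {P Q : Matrix (Fin m) (Fin m) ℝ} (hP : P.PosDef)
    (hQ : Q.IsHermitian) :
    ∃ (S : Matrix (Fin m) (Fin m) ℝ) (d : Fin m → ℝ), S.det ≠ 0 ∧ Sᵀ * P * S = 1 ∧
      Sᵀ * Q * S = diagonal d := by
  obtain ⟨U, a, hU, hUP⟩ := exists_orthogonal_diag hP.isHermitian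
  have hUinj : Function.Injective U.mulVec := by
    intro x y hxy
    have := congrArg (Uᵀ *ᵥ ·) hxy
    simpa [mulVec_mulVec, hU] using this
  have ha : ∀ i, 0 < a i := by
    have := hP.conjTranspose_mul_mul_same hUinj
    rw [conjTranspose_eq_transpose_of_trivial, hUP] at this
    exact posDef_diagonal_iff.mp this
  -- Rescaling the eigenvectors of `P` by `a i ^ (-1/2)` turns `P` into the identity.
  set R : Matrix (Fin m) (Fin m) ℝ := U * diagonal (fun i => (√(a i))⁻¹) with hR
  have hRP : Rᵀ * P * R = 1 := by
    have : Rᵀ * P * R = diagonal (fun i => (√(a i))⁻¹) * (Uᵀ * P * U)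
        * diagonal (fun i => (√(a i))⁻¹) := by
      simp only [hR, transpose_mul, diagonal_transpose, Matrix.mul_assoc]
    rw [this, hUP, diagonal_mul_diagonal, diagonal_mul_diagonal, ← diagonal_one]
    congr 1
    funext i
    have h1 : √(a i) ≠ 0 := (Real.sqrt_pos.mpr (ha i)).ne'
    have h2 := Real.mul_self_sqrt (ha i).le
    field_simp
    nlinarith
  have hRQ : (Rᵀ * Q * R).IsHermitian := by
    simpa using isHermitian_conjTranspose_mul_mul R hQ
  obtain ⟨V, d, hV, hVQ⟩ := exists_orthogonal_diag hRQ
  have key : ∀ X : Matrix (Fin m) (Fin m) ℝ, (R * V)ᵀ * X * (R * V) = Vᵀ * (Rᵀ * X * R) * V := by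
    intro X
    simp only [transpose_mul, Matrix.mul_assoc]
  have h1 : (R * V)ᵀ * P * (R * V) = 1 := by rw [key, hRP, Matrix.mul_one, hV]
  refine ⟨R * V, d, fun h0 => ?_, h1, by rw [key, hVQ]⟩
  have := congrArg det h1
  rw [det_mul, h0, mul_zero, det_one] at this
  exact zero_ne_one this

/-- Linear change of variables `t ↦ S t`. -/
theorem integral_comp_mulVec {m : ℕ} (S : Matrix (Fin m) (Fin m) ℝ) (hS : S.det ≠ 0)
    (f : (Fin m → ℝ) → ℂ) :
    ((Integrable fun t => f (S *ᵥ t)) → Integrable f) ∧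
      ∫ t, f t = (|S.det| : ℝ) * ∫ t, f (S *ᵥ t) := by
  have hmap := Real.map_matrix_volume_pi_eq_smul_volume_pi hS
  have hemb : MeasurableEmbedding (toLin' S) := by
    have := (LinearEquiv.ofIsUnitDet (f := toLin' S) (v := Pi.basisFun ℝ (Fin m))
      (v' := Pi.basisFun ℝ (Fin m)) (by simpa using hS)).toContinuousLinearEquiv
      |>.toHomeomorph.measurableEmbedding
    exact this
  have hc : ENNReal.ofReal |S.det⁻¹| ≠ 0 := by simpa using hS
  constructor
  · intro h
    have h2 : Integrable f (Measure.map (toLin' S) volume) := (hemb.integrable_map_iff).mpr h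
    rw [hmap] at h2
    exact (integrable_smul_measure hc ENNReal.ofReal_ne_top).mp h2
  · have h2 := hemb.integral_map (μ := volume) f
    rw [hmap, integral_smul_measure] at h2
    simp only [toLin'_apply] at h2
    rw [← h2, ENNReal.toReal_ofReal (abs_nonneg _), Complex.real_smul, ← mul_assoc,
      ← Complex.ofReal_mul, ← abs_mul, mul_inv_cancel₀ hS]
    simp

/-- The Gaussian integral with complex symmetric matrix `P + iQ`, `P` positive definite. Squaring
avoids choosing a branch of `det (P + iQ) ^ (-1/2)`. In coordinates in which `P` is the identity and
`Q` is diagonal, the integral is a product of one-dimensional ones. -/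
theorem gaussian_matrix {m : ℕ} {P Q : Matrix (Fin m) (Fin m) ℝ} (hP : P.PosDef)
    (hQ : Q.IsHermitian) :
    Integrable (fun t : Fin m → ℝ =>
        Complex.exp (-π * ((t ⬝ᵥ P *ᵥ t : ℝ) + Complex.I * (t ⬝ᵥ Q *ᵥ t : ℝ)))) ∧
    (∫ t : Fin m → ℝ,
        Complex.exp (-π * ((t ⬝ᵥ P *ᵥ t : ℝ) + Complex.I * (t ⬝ᵥ Q *ᵥ t : ℝ)))) ^ 2
      * (P.map Complex.ofReal + Complex.I • Q.map Complex.ofReal).det = 1 := by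
  obtain ⟨S, d, hS, hSP, hSQ⟩ := exists_simultaneous_diag hP hQ
  set b : Fin m → ℂ := fun i => π * (1 + Complex.I * d i) with hb_def
  have hb : ∀ i, 0 < (b i).re := fun i => by simp [hb_def, Real.pi_pos]
  have hquad : ∀ (X : Matrix (Fin m) (Fin m) ℝ) (t : Fin m → ℝ),
      (S *ᵥ t) ⬝ᵥ X *ᵥ (S *ᵥ t) = t ⬝ᵥ (Sᵀ * X * S) *ᵥ t := by
    intro X t
    rw [← mulVec_mulVec, ← mulVec_mulVec, dotProduct_mulVec t, vecMul_transpose]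
  have hexp : ∀ t : Fin m → ℝ,
      Complex.exp (-π * (((S *ᵥ t) ⬝ᵥ P *ᵥ (S *ᵥ t) : ℝ)
        + Complex.I * ((S *ᵥ t) ⬝ᵥ Q *ᵥ (S *ᵥ t) : ℝ)))
      = Complex.exp (-∑ i, b i * (t i : ℂ) ^ 2 + ∑ i, (0 : Fin m → ℂ) i * t i) := by
    intro t
    rw [hquad, hquad, hSP, hSQ]
    congr 1
    simp only [one_mulVec, dotProduct, mulVec_diagonal, hb_def, Complex.ofReal_sum, Pi.zero_apply,
      zero_mul, Finset.sum_const_zero, add_zero, Finset.mul_sum, ← Finset.sum_add_distrib,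
      ← Finset.sum_neg_distrib]
    refine Finset.sum_congr rfl fun i _ => ?_
    push_cast
    ring
  obtain ⟨hI, hE⟩ := integral_comp_mulVec S hS fun t : Fin m → ℝ =>
        Complex.exp (-π * ((t ⬝ᵥ P *ᵥ t : ℝ) + Complex.I * (t ⬝ᵥ Q *ᵥ t : ℝ)))
  simp only [hexp] at hI hE
  refine ⟨hI (GaussianFourier.integrable_cexp_neg_sum_mul_add hb 0), ?_⟩
  rw [hE, GaussianFourier.integral_cexp_neg_sum_mul_add hb 0]
  have hdet : (S.det : ℂ) ^ 2 * (P.map Complex.ofReal + Complex.I • Q.map Complex.ofReal).det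
      = ∏ i, (1 + Complex.I * d i) := by
    have h : (S.map Complex.ofReal)ᵀ * (P.map Complex.ofReal + Complex.I • Q.map Complex.ofReal)
        * S.map Complex.ofReal = diagonal fun i => (1 + Complex.I * d i) := by
      have hm : ∀ X : Matrix (Fin m) (Fin m) ℝ,
          (S.map Complex.ofReal)ᵀ * X.map Complex.ofReal * S.map Complex.ofReal
            = (Sᵀ * X * S).map Complex.ofReal := by
        intro X
        have : ∀ Y Z : Matrix (Fin m) (Fin m) ℝ,
            (Y * Z).map Complex.ofReal = Y.map Complex.ofReal * Z.map Complex.ofReal :=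
          fun Y Z => Matrix.map_mul (f := Complex.ofRealHom)
        rw [this, this, transpose_map]
      rw [Matrix.mul_add, Matrix.add_mul, Matrix.mul_smul, Matrix.smul_mul, hm, hm, hSP, hSQ]
      ext i j
      by_cases hij : i = j <;> simp [hij, diagonal]
    have h2 := congrArg det h
    have h3 : (S.map Complex.ofReal).det = (S.det : ℂ) :=
      (RingHom.map_det Complex.ofRealHom S).symm
    rw [det_mul, det_mul, det_transpose, det_diagonal, h3] at h2
    rw [← h2]
    ring
  have habs : ((|S.det| : ℝ) : ℂ) ^ 2 = (S.det : ℂ) ^ 2 := by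
    rw [← Complex.ofReal_pow, sq_abs, Complex.ofReal_pow]
  rw [mul_pow, habs, mul_right_comm, hdet, ← Finset.prod_pow, ← Finset.prod_mul_distrib]
  refine Finset.prod_eq_one fun i _ => ?_
  have h1 : (1 + Complex.I * d i : ℂ) ≠ 0 := fun h => by
    have := congrArg Complex.re h
    simp at this
  have h2 : (π : ℂ) ≠ 0 := by exact_mod_cast Real.pi_ne_zero
  have h3 : ((π / b i : ℂ) ^ (1 / 2 : ℂ)) ^ 2 = π / b i := by
    rw [← Complex.cpow_nat_mul]
    norm_num
  simp only [Pi.zero_apply, ne_eq, OfNat.ofNat_ne_zero, not_false_eq_true, zero_pow, zero_div,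
    Complex.exp_zero, mul_one, h3]
  simp only [hb_def]
  field_simp

/-- The `n × m` matrix of `v`-components of the `ν j`; its first `n - l` rows form `A`. -/
def vMat {n m : ℕ} (ν : Fin m → RR2 n) : Matrix (Fin n) (Fin m) ℝ := Matrix.of fun i j => (ν j).2 i

/-- The `n × m` matrix of `u`-components of the `ν j`; its first `n - l` rows form `B`. -/
def uMat {n m : ℕ} (ν : Fin m → RR2 n) : Matrix (Fin n) (Fin m) ℝ := Matrix.of fun i j => (ν j).1 i

theorem sum_smul_eVec {n : ℕ} (u : Fin n → ℝ) : ∑ i, u i • eVec i = ((u, 0) : RR2 n) := by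
  refine Prod.ext ?_ ?_
  · rw [Prod.fst_sum]
    ext k
    simp [eVec, Finset.sum_apply, Pi.single_apply]
  · rw [Prod.snd_sum]
    simp [eVec]

theorem sum_smul_nu {n m : ℕ} (ν : Fin m → RR2 n) (t : Fin m → ℝ) :
    ∑ j, t j • ν j = (uMat ν *ᵥ t, vMat ν *ᵥ t) := by
  refine Prod.ext ?_ ?_
  · rw [Prod.fst_sum]
    ext k
    simp [uMat, mulVec, dotProduct, Finset.sum_apply, mul_comm]
  · rw [Prod.snd_sum]
    ext k
    simp [vMat, mulVec, dotProduct, Finset.sum_apply, mul_comm]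

/-- For fixed `t` the kernel is a Gaussian in `u` with linear term, times a factor free of `u`. -/
theorem modelKernel_eq {n m : ℕ} (ν : Fin m → RR2 n) (t : Fin m → ℝ) (u : Fin n → ℝ) :
    modelKernel ν t u =
      Complex.exp (-((π : ℂ) / 2) * ∑ i, (u i : ℂ) ^ 2
        + ∑ i, (π * ((uMat ν *ᵥ t) i - Complex.I * (vMat ν *ᵥ t) i) : ℂ) * u i)
      * Complex.exp (-((π : ℂ) / 2) *
          ∑ i, (((uMat ν *ᵥ t) i : ℂ) ^ 2 + ((vMat ν *ᵥ t) i : ℂ) ^ 2)) := by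
  rw [modelKernel, sum_smul_eVec, sum_smul_nu, ← Complex.exp_add]
  congr 1
  simp only [stdInner, stdSymp, Prod.fst_sub, Prod.snd_sub, Pi.sub_apply, Pi.zero_apply,
    Complex.ofReal_sum, Complex.ofReal_add, Finset.mul_sum, ← Finset.sum_add_distrib,
    ← Finset.sum_sub_distrib]
  refine Finset.sum_congr rfl fun i _ => ?_
  push_cast
  ring

theorem norm_modelKernel {n m : ℕ} (ν : Fin m → RR2 n) (t : Fin m → ℝ) (u : Fin n → ℝ) :
    ((‖modelKernel ν t u‖ : ℝ) : ℂ) =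
      Complex.exp (-((π : ℂ) / 2) * ∑ i, (u i : ℂ) ^ 2
        + ∑ i, (π * (uMat ν *ᵥ t) i : ℂ) * u i)
      * Complex.exp (-((π : ℂ) / 2) *
          ∑ i, (((uMat ν *ᵥ t) i : ℂ) ^ 2 + ((vMat ν *ᵥ t) i : ℂ) ^ 2)) := by
  rw [modelKernel, sum_smul_eVec, sum_smul_nu, ← Complex.exp_add, Complex.norm_exp,
    Complex.ofReal_exp]
  congr 1
  have hre : ∀ x y : ℝ, (-((π : ℂ) / 2) * (x : ℂ) - (π : ℂ) * Complex.I * (y : ℂ)).re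
      = -(π / 2) * x := by
    intro x y
    have : (-((π : ℂ) / 2) * (x : ℂ) - (π : ℂ) * Complex.I * (y : ℂ))
        = ((-(π / 2) * x : ℝ) : ℂ) - ((π * y : ℝ) : ℂ) * Complex.I := by push_cast; ring
    rw [this, Complex.sub_re, Complex.re_ofReal_mul, Complex.ofReal_re]
    simp
  rw [hre]
  simp only [stdInner, Prod.fst_sub, Prod.snd_sub, Pi.sub_apply, Pi.zero_apply,
    Complex.ofReal_sum, Complex.ofReal_add, Complex.ofReal_mul, Finset.mul_sum,
    ← Finset.sum_add_distrib]
  refine Finset.sum_congr rfl fun i _ => ?_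
  push_cast
  ring

theorem pi_half_re_pos : 0 < ((π : ℂ) / 2).re := by
  have : ((π : ℂ) / 2) = ((π / 2 : ℝ) : ℂ) := by push_cast; ring
  rw [this, Complex.ofReal_re]
  positivity

theorem transpose_mul_quad {n m : ℕ} (X Y : Matrix (Fin n) (Fin m) ℝ) (t : Fin m → ℝ) :
    t ⬝ᵥ (Xᵀ * Y) *ᵥ t = ∑ i, (X *ᵥ t) i * (Y *ᵥ t) i := by
  rw [← mulVec_mulVec, dotProduct_mulVec, vecMul_transpose, dotProduct]

/-- Integrating out `u` leaves the Gaussian in `t` with matrix `VᵀV + i UᵀV`, where `U` and `V` are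
the matrices of `u`- and `v`-components. The factor `π / (π / 2)` is `2`. -/
theorem integral_modelKernel {n m : ℕ} (ν : Fin m → RR2 n) (t : Fin m → ℝ) :
    ∫ u, modelKernel ν t u = ((π : ℂ) / (π / 2)) ^ (n / 2 : ℂ) *
      Complex.exp (-π * ((t ⬝ᵥ ((vMat ν)ᵀ * vMat ν) *ᵥ t : ℝ)
        + Complex.I * (t ⬝ᵥ ((uMat ν)ᵀ * vMat ν) *ᵥ t : ℝ))) := by
  simp_rw [modelKernel_eq]
  rw [integral_mul_const, GaussianFourier.integral_cexp_neg_mul_sum_add pi_half_re_pos,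
    mul_assoc, ← Complex.exp_add, Fintype.card_fin]
  congr 2
  have h2 : (π : ℂ) ≠ 0 := by exact_mod_cast Real.pi_ne_zero
  simp only [transpose_mul_quad, Complex.ofReal_sum, Finset.mul_sum, Finset.sum_div,
    ← Finset.sum_add_distrib]
  refine Finset.sum_congr rfl fun i _ => ?_
  push_cast
  field_simp
  linear_combination 4 * ((vMat ν *ᵥ t) i : ℂ) ^ 2 * Complex.I_sq

/-- Integrating the absolute value over `u` leaves a real Gaussian in `t` with matrix `VᵀV / 2`,
written with a zero imaginary part so that `gaussian_matrix` applies to it. -/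
theorem integral_norm_modelKernel {n m : ℕ} (ν : Fin m → RR2 n) (t : Fin m → ℝ) :
    ((∫ u, ‖modelKernel ν t u‖ : ℝ) : ℂ) = ((π : ℂ) / (π / 2)) ^ (n / 2 : ℂ) *
      Complex.exp (-π * ((t ⬝ᵥ ((1 / 2 : ℝ) • ((vMat ν)ᵀ * vMat ν)) *ᵥ t : ℝ)
        + Complex.I * (t ⬝ᵥ (0 : Matrix (Fin m) (Fin m) ℝ) *ᵥ t : ℝ))) := by
  rw [← integral_complex_ofReal]
  simp_rw [norm_modelKernel]
  rw [integral_mul_const, GaussianFourier.integral_cexp_neg_mul_sum_add pi_half_re_pos,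
    mul_assoc, ← Complex.exp_add, Fintype.card_fin]
  congr 2
  have h2 : (π : ℂ) ≠ 0 := by exact_mod_cast Real.pi_ne_zero
  rw [smul_mulVec, dotProduct_smul, transpose_mul_quad, zero_mulVec, dotProduct_zero, smul_eq_mul,
    Complex.ofReal_zero, mul_zero, add_zero, Complex.ofReal_mul]
  simp only [Complex.ofReal_sum, Finset.mul_sum, Finset.sum_div,
    ← Finset.sum_add_distrib]
  refine Finset.sum_congr rfl fun i _ => ?_
  push_cast
  field_simp
  ring

theorem continuous_modelKernel {n m : ℕ} (ν : Fin m → RR2 n) :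
    Continuous fun p : (Fin m → ℝ) × (Fin n → ℝ) => modelKernel ν p.1 p.2 := by
  unfold modelKernel stdInner stdSymp
  fun_prop

theorem integrable_modelKernel {n m : ℕ} (ν : Fin m → RR2 n)
    (hP : ((vMat ν)ᵀ * vMat ν).PosDef) :
    Integrable (fun p : (Fin m → ℝ) × (Fin n → ℝ) => modelKernel ν p.1 p.2) := by
  refine (integrable_prod_iff (continuous_modelKernel ν).aestronglyMeasurable).mpr
    ⟨Filter.Eventually.of_forall fun t => ?_, ?_⟩
  · simp_rw [modelKernel_eq]
    exact (GaussianFourier.integrable_cexp_neg_mul_sum_add pi_half_re_pos _).mul_const _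
  · have hg := (gaussian_matrix (hP.smul (show (0 : ℝ) < 1 / 2 by norm_num)) isHermitian_zero).1
    have h := hg.const_mul (((π : ℂ) / (π / 2)) ^ (n / 2 : ℂ))
    simp_rw [← integral_norm_modelKernel] at h
    simpa using h.re

/-- If the `v`-component of `∑ t j • ν j` vanishes, this vector lies in both spans, hence is zero;
orthonormality then gives `t = 0`. -/
theorem mulVec_vMat_injective {n m : ℕ} (ν : Fin m → RR2 n)
    (hortho : ∀ j k, stdInner (ν j) (ν k) = if j = k then 1 else 0)
    (hspan : Submodule.span ℝ (Set.range ν) ⊓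
        Submodule.span ℝ (Set.range (eVec (n := n))) = ⊥) :
    Function.Injective (vMat ν).mulVec := by
  rw [← coe_mulVecLin, ← LinearMap.ker_eq_bot, LinearMap.ker_eq_bot']
  intro t ht
  rw [mulVecLin_apply] at ht
  have h1 : ∑ j, t j • ν j ∈ Submodule.span ℝ (Set.range ν) :=
    Submodule.sum_mem _ fun j _ => Submodule.smul_mem _ _ (Submodule.subset_span ⟨j, rfl⟩)
  have h2 : ∑ j, t j • ν j ∈ Submodule.span ℝ (Set.range (eVec (n := n))) := by
    rw [sum_smul_nu, ht, ← sum_smul_eVec]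
    exact Submodule.sum_mem _ fun j _ => Submodule.smul_mem _ _ (Submodule.subset_span ⟨j, rfl⟩)
  have h3 : ∑ j, t j • ν j = 0 := by
    have : ∑ j, t j • ν j ∈ (⊥ : Submodule ℝ (RR2 n)) := hspan ▸ ⟨h1, h2⟩
    simpa using this
  funext k
  have h4 : stdInner (∑ j, t j • ν j) (ν k) = ∑ j, t j * stdInner (ν j) (ν k) := by
    simp only [stdInner, Prod.fst_sum, Prod.snd_sum, Finset.sum_apply, Prod.smul_fst,
      Prod.smul_snd, Pi.smul_apply, smul_eq_mul, Finset.sum_mul, mul_add, Finset.mul_sum,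
      Finset.sum_add_distrib, mul_assoc]
    congr 1 <;> exact Finset.sum_comm
  rw [h3] at h4
  simp only [hortho, mul_ite, mul_one, mul_zero, Finset.sum_ite_eq', Finset.mem_univ, if_true] at h4
  rw [← h4]
  simp [stdInner]

/-- Clean-intersection version of the model Gaussian integral: `ν₁, …, ν_m` orthonormal,
`Ω`-isotropic, orthogonal to `e_i` and `f_i` for `i > n - l`, and spanning a subspace meeting
`span{e₁,…,e_n}` only at `0`. Then the double integral `J` converges absolutely and
`J² · det(AᵀA + √-1 BᵀA) = 2ⁿ`, where `A, B` are the `(n-l) × m` matrices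
`A_{ij} = Ω(e_i, ν_j)`, `B_{ij} = ⟨e_i, ν_j⟩` for `1 ≤ i ≤ n - l`. -/
theorem stmt_7 (n l m : ℕ) (hl : l ≤ n) (hm : 1 ≤ m) (ν : Fin m → RR2 n)
    (hortho : ∀ j k, stdInner (ν j) (ν k) = if j = k then 1 else 0)
    (hiso : ∀ j k, stdSymp (ν j) (ν k) = 0)
    (hperp : ∀ j, ∀ i : Fin n, n - l ≤ (i : ℕ) →
      stdInner (ν j) (eVec i) = 0 ∧ stdInner (ν j) (fVec i) = 0)
    (hspan : Submodule.span ℝ (Set.range ν) ⊓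
        Submodule.span ℝ (Set.range (eVec (n := n))) = ⊥)
    (A B : Matrix (Fin (n - l)) (Fin m) ℝ)
    (hA : ∀ i j, A i j = stdSymp (eVec (Fin.castLE (Nat.sub_le n l) i)) (ν j))
    (hB : ∀ i j, B i j = stdInner (eVec (Fin.castLE (Nat.sub_le n l) i)) (ν j)) :
    Integrable (fun p : (Fin m → ℝ) × (Fin n → ℝ) => modelKernel ν p.1 p.2)
    ∧ (∫ t : Fin m → ℝ, ∫ u : Fin n → ℝ, modelKernel ν t u) ^ 2
        * ((A.transpose * A).map Complex.ofReal
            + Complex.I • (B.transpose * A).map Complex.ofReal).det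
      = 2 ^ n := by
  have hAv : ∀ i j, A i j = vMat ν (Fin.castLE (Nat.sub_le n l) i) j := by
    intro i j
    simp [hA, stdSymp, eVec, vMat, Pi.single_apply]
  have hBu : ∀ i j, B i j = uMat ν (Fin.castLE (Nat.sub_le n l) i) j := by
    intro i j
    simp [hB, stdInner, eVec, uMat, Pi.single_apply]
  have hv0 : ∀ (i : Fin n) j, n - l ≤ (i : ℕ) → vMat ν i j = 0 := by
    intro i j hi
    simpa [stdInner, fVec, vMat, Pi.single_apply] using (hperp j i hi).2
  -- The rows of `vMat ν` beyond `n - l` vanish, so they do not contribute to the products.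
  have hsum : ∀ (X : Matrix (Fin (n - l)) (Fin m) ℝ) (X' : Matrix (Fin n) (Fin m) ℝ),
      (∀ i j, X i j = X' (Fin.castLE (Nat.sub_le n l) i) j) → Xᵀ * A = X'ᵀ * vMat ν := by
    intro X X' h
    ext j k
    simp only [mul_apply, transpose_apply]
    refine Fintype.sum_of_injective (Fin.castLE (Nat.sub_le n l)) (Fin.castLE_injective _) _ _
      (fun i hi => ?_) fun i => by rw [h, hAv]
    rw [hv0 i k, mul_zero]
    by_contra hlt
    exact hi ⟨⟨i, not_le.mp hlt⟩, rfl⟩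
  have hP : ((vMat ν)ᵀ * vMat ν).PosDef := by
    simpa using PosDef.conjTranspose_mul_self _ (mulVec_vMat_injective ν hortho hspan)
  -- Isotropy says exactly that `Bᵀ A` is symmetric.
  have hQ : ((uMat ν)ᵀ * vMat ν).IsHermitian := by
    ext j k
    have h := hiso k j
    simp only [stdSymp, Finset.sum_sub_distrib] at h
    simp only [conjTranspose_apply, mul_apply, transpose_apply, uMat, vMat, of_apply, star_trivial]
    rw [sub_eq_zero.mp h]
    exact Finset.sum_congr rfl fun i _ => mul_comm _ _
  refine ⟨integrable_modelKernel ν hP, ?_⟩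
  rw [hsum A (vMat ν) hAv, hsum B (uMat ν) hBu]
  simp_rw [integral_modelKernel]
  rw [integral_const_mul, mul_pow, mul_assoc, (gaussian_matrix hP hQ).2, mul_one,
    ← Complex.cpow_nat_mul]
  have h2 : (π : ℂ) ≠ 0 := by exact_mod_cast Real.pi_ne_zero
  rw [show (π : ℂ) / (π / 2) = 2 by field_simp,
    show ((2 : ℕ) : ℂ) * (n / 2) = n by push_cast; ring, Complex.cpow_natCast]
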